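/- arXiv:2310.06429 — 6 statements merged into one kernel-verified Lean document; each statement's English description precedes it below -/
import Mathlib

section
/- For every z ∈ ℂ with z ∉ {0, 1, −1}, setting x = |z|²/(1+|z|²) and y = |z+1|²/(2(1+|z|²)), the complex identity x/z + 2y/(z²−1) = 1/(z−1) holds. Equivalently, (x,y) solves the linear envelope equation s_z x + t_z y + c_z = 0 obtained by taking the Wirtinger z-derivative of the Aztec diamond tangent-plane data s = (π − Arg z)/π, t = (π + Arg((z+1)/(z−1)))/π, c = (−π + Arg(z−1))/π. -/
open Complex

/-- Aztec diamond envelope identity: for `z ∉ {0, 1, −1}`, with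
`x = |z|²/(1+|z|²)` and `y = |z+1|²/(2(1+|z|²))`, one has
`x/z + 2y/(z²−1) = 1/(z−1)`. -/
theorem aztec_diamond_envelope (z : ℂ) (h0 : z ≠ 0) (h1 : z ≠ 1) (hm1 : z ≠ -1)
    (x y : ℝ)
    (hx : x = ‖z‖ ^ 2 / (1 + ‖z‖ ^ 2))
    (hy : y = ‖z + 1‖ ^ 2 / (2 * (1 + ‖z‖ ^ 2))) :
    (x : ℂ) / z + 2 * (y : ℂ) / (z ^ 2 - 1) = 1 / (z - 1) := by
  have hN : ((‖z‖ ^ 2 : ℝ) : ℂ) = z * (starRingEnd ℂ) z := by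
    rw [Complex.mul_conj, Complex.normSq_eq_norm_sq]
  have hM : ((‖z + 1‖ ^ 2 : ℝ) : ℂ) = (z + 1) * ((starRingEnd ℂ) z + 1) := by
    have h := Complex.mul_conj (z + 1)
    rw [Complex.normSq_eq_norm_sq, map_add, map_one] at h
    exact h.symm
  have hD : (1 + z * (starRingEnd ℂ) z) ≠ 0 := by
    rw [← hN]
    have : (1 + ‖z‖ ^ 2 : ℝ) ≠ 0 := by positivity
    exact_mod_cast this
  have hxc : (x : ℂ) = z * (starRingEnd ℂ) z / (1 + z * (starRingEnd ℂ) z) := by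
    rw [hx, Complex.ofReal_div, Complex.ofReal_add, hN, Complex.ofReal_one]
  have hyc : (y : ℂ) = (z + 1) * ((starRingEnd ℂ) z + 1)
      / (2 * (1 + z * (starRingEnd ℂ) z)) := by
    rw [hy, Complex.ofReal_div, Complex.ofReal_mul, Complex.ofReal_add, hN, hM,
      Complex.ofReal_one, Complex.ofReal_ofNat]
  have ha : z - 1 ≠ 0 := sub_ne_zero.mpr h1
  have hb : z + 1 ≠ 0 := fun h => hm1 (eq_neg_of_add_eq_zero_left h)
  have hf : z ^ 2 - 1 = (z - 1) * (z + 1) := by ring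
  rw [hxc, hyc, hf]
  generalize (starRingEnd ℂ) z = w at *
  field_simp
  ring
end

section
/- Let m₁, m₂ ∈ ℝ with m₂ < m₁, m₂ < 1 and m₁ + m₂ < 2. Define a₂ = −1, a₃ = −√2, a₄ = −(1+√2)(2−m₁−m₂)/(2(1−m₂)), a₅ = −(4−2√2)(1−m₂)/(m₁−m₂), a₆ = −(2−m₁−m₂)/(m₁−m₂), a₇ = −√2(2−m₁−m₂)/(m₁−m₂), and let z(u) = B₁(u−a₄)/((u+1)(u−a₆)) with B₁ = −a₆/a₄. Define the rational function D(u) = −(1/(u−a₆) − 1/(u−a₇)) + (m₁−1)(1/(u−a₅) − 1/(u−a₆)) + (m₁−m₂)(1/(u−a₄) − 1/(u−a₅)) + (m₁−1)(1/(u−a₃) − 1/(u−a₄)) − (1/(u−a₂) − 1/(u−a₃)). Then for every u₀ ∈ ℂ that is not a pole of z or of D and satisfies z'(u₀) = 0, one has D(u₀) = 0. -/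
open Complex

lemma partA (u s t : ℂ) (e1 : u + s * t ≠ 0) (e2 : u + t ≠ 0)
    (e3 : u + s ≠ 0) (e4 : u + 1 ≠ 0)
    (hE : (t + 1) * u ^ 2 + 2 * (s + 1) * t * u + s * t * (t + 1) = 0) :
    1 / (u + s * t) - 1 / (u + t) + 1 / (u + s) - 1 / (u + 1) = 0 := by
  have e : 1 / (u + s * t) - 1 / (u + t) + 1 / (u + s) - 1 / (u + 1)
      = (1 - s) * ((t + 1) * u ^ 2 + 2 * (s + 1) * t * u + s * t * (t + 1)) /
        ((u + s * t) * (u + t) * (u + s) * (u + 1)) := by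
    field_simp
    ring
  rw [e, hE]; simp

lemma partB (u s t a : ℂ) (hs : s ^ 2 = 2) (ha : a * (t + 1) = (1 + s) * t) (hw : t + 1 ≠ 0)
    (e1 : u + (2 - s) * (t + 1) ≠ 0) (e2 : u + t ≠ 0)
    (e3 : u + s ≠ 0) (e4 : u + a ≠ 0)
    (hE : (t + 1) * u ^ 2 + 2 * (s + 1) * t * u + s * t * (t + 1) = 0) :
    (1 - t) * (1 / (u + (2 - s) * (t + 1)) - 1 / (u + t) + 1 / (u + s) - 1 / (u + a))
      + 2 * (1 / (u + a) - 1 / (u + (2 - s) * (t + 1))) = 0 := by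
  have hE' : u ^ 2 + 2 * a * u + s * t = 0 := by
    apply mul_left_cancel₀ hw
    linear_combination hE + 2 * u * ha
  field_simp
  apply mul_left_cancel₀ hw
  clear e1 e2 e3 e4 hw
  grind

/-- For the symmetric octagon domino construction, the rational function `D`
(which is `2πi` times the Wirtinger derivative of the intercept function `c`)
vanishes at every critical point of the degree-2 map
`z(u) = B₁(u−a₄)/((u+1)(u−a₆))` which is not a pole of `z` or of `D`. -/
theorem octagon_critical_points (m₁ m₂ : ℝ) (h1 : m₂ < m₁) (h2 : m₂ < 1)
    (h3 : m₁ + m₂ < 2)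
    (a₂ a₃ a₄ a₅ a₆ a₇ B₁ : ℝ)
    (ha2 : a₂ = -1) (ha3 : a₃ = -Real.sqrt 2)
    (ha4 : a₄ = -((1 + Real.sqrt 2) * (2 - m₁ - m₂)) / (2 * (1 - m₂)))
    (ha5 : a₅ = -((4 - 2 * Real.sqrt 2) * (1 - m₂)) / (m₁ - m₂))
    (ha6 : a₆ = -(2 - m₁ - m₂) / (m₁ - m₂))
    (ha7 : a₇ = -(Real.sqrt 2 * (2 - m₁ - m₂)) / (m₁ - m₂))
    (hB : B₁ = -a₆ / a₄)
    (z D : ℂ → ℂ)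
    (hz : z = fun u => (B₁ : ℂ) * (u - (a₄ : ℂ)) / ((u + 1) * (u - (a₆ : ℂ))))
    (hD : D = fun u =>
      -((1 : ℂ) / (u - (a₆ : ℂ)) - 1 / (u - (a₇ : ℂ)))
      + ((m₁ : ℂ) - 1) * (1 / (u - (a₅ : ℂ)) - 1 / (u - (a₆ : ℂ)))
      + ((m₁ : ℂ) - (m₂ : ℂ)) * (1 / (u - (a₄ : ℂ)) - 1 / (u - (a₅ : ℂ)))
      + ((m₁ : ℂ) - 1) * (1 / (u - (a₃ : ℂ)) - 1 / (u - (a₄ : ℂ)))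
      - (1 / (u - (a₂ : ℂ)) - 1 / (u - (a₃ : ℂ)))) :
    ∀ u₀ : ℂ, u₀ ≠ -1 → u₀ ≠ (a₂ : ℂ) → u₀ ≠ (a₃ : ℂ) → u₀ ≠ (a₄ : ℂ) →
      u₀ ≠ (a₅ : ℂ) → u₀ ≠ (a₆ : ℂ) → u₀ ≠ (a₇ : ℂ) →
      deriv z u₀ = 0 → D u₀ = 0 := by
  intro u n1 n2 n3 n4 n5 n6 n7 hd
  have hp : (m₁ : ℂ) - m₂ ≠ 0 := by
    have : m₁ - m₂ ≠ 0 := by linarith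
    exact_mod_cast this
  have hq : (1 : ℂ) - m₂ ≠ 0 := by
    have : 1 - m₂ ≠ 0 := by linarith
    exact_mod_cast this
  have hT : (2 : ℂ) - m₁ - m₂ ≠ 0 := by
    have : 2 - m₁ - m₂ ≠ 0 := by linarith
    exact_mod_cast this
  have hs : ((Real.sqrt 2 : ℝ) : ℂ) ^ 2 = 2 := by
    have : Real.sqrt 2 ^ 2 = 2 := Real.sq_sqrt (by norm_num)
    exact_mod_cast this
  have hBne : (B₁ : ℂ) ≠ 0 := by
    have h6 : a₆ ≠ 0 := by
      rw [ha6]; apply div_ne_zero <;> linarith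
    have h4 : a₄ ≠ 0 := by
      rw [ha4]
      have := Real.sqrt_nonneg 2
      apply div_ne_zero
      · apply neg_ne_zero.2
        apply mul_ne_zero <;> linarith
      · linarith
    have : B₁ ≠ 0 := by
      rw [hB]; exact div_ne_zero (neg_ne_zero.2 h6) h4
    exact_mod_cast this
  have f1 : u + 1 ≠ 0 := fun h => n1 (eq_neg_of_add_eq_zero_left h)
  have f6 : u - a₆ ≠ 0 := sub_ne_zero.2 n6
  have hcrit : (u + 1) * (u - a₆) - (u - a₄) * ((u - a₆) + (u + 1)) = 0 := by
    have H : HasDerivAt z (((B₁ : ℂ) * 1 * ((u + 1) * (u - a₆)) -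
        B₁ * (u - a₄) * (1 * (u - a₆) + (u + 1) * 1)) / ((u + 1) * (u - a₆)) ^ 2) u := by
      rw [hz]
      exact (((hasDerivAt_id u).sub_const _).const_mul _).div
        (((hasDerivAt_id u).add_const _).mul ((hasDerivAt_id u).sub_const _))
        (mul_ne_zero f1 f6)
    rw [H.deriv, div_eq_zero_iff] at hd
    rcases hd with hd | hd
    · apply mul_left_cancel₀ hBne
      linear_combination hd
    · exact absurd hd (pow_ne_zero 2 (mul_ne_zero f1 f6))
  obtain ⟨s, hsd⟩ : ∃ s : ℂ, s = ((Real.sqrt 2 : ℝ) : ℂ) := ⟨_, rfl⟩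
  obtain ⟨t, ht⟩ : ∃ t : ℂ, t = (2 - m₁ - m₂) / (m₁ - m₂) := ⟨_, rfl⟩
  have hw : t + 1 = 2 * (1 - m₂) / (m₁ - m₂) := by
    rw [ht]; field_simp; ring
  have hw0 : t + 1 ≠ 0 := by
    rw [hw]; exact div_ne_zero (mul_ne_zero two_ne_zero hq) hp
  have c2 : (a₂ : ℂ) = -1 := by rw [ha2]; push_cast; ring
  have c3 : (a₃ : ℂ) = -s := by rw [ha3, hsd]; push_cast; ring
  have c4 : -(a₄ : ℂ) * (t + 1) = (1 + s) * t := by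
    rw [ha4, hsd, hw, ht]; push_cast; field_simp
  have c5 : (a₅ : ℂ) = -((2 - s) * (t + 1)) := by
    rw [ha5, hsd, hw]; push_cast; field_simp; ring
  have c6 : (a₆ : ℂ) = -t := by rw [ha6, ht]; push_cast; ring
  have c7 : (a₇ : ℂ) = -(s * t) := by rw [ha7, ht, hsd]; push_cast; ring
  have ck : (m₁ : ℂ) - 1 = (m₁ - m₂) / 2 * (1 - t) := by
    rw [ht]; field_simp; ring
  rw [← hsd] at hs
  rw [c6] at hcrit n6
  rw [c3] at n3
  rw [c5] at n5
  rw [c7] at n7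
  have hE : (t + 1) * u ^ 2 + 2 * (s + 1) * t * u + s * t * (t + 1) = 0 := by
    linear_combination (-(t + 1)) * hcrit - (2 * u + 1 + t) * c4
  have g3 : u + s ≠ 0 := fun h => n3 (eq_neg_of_add_eq_zero_left h)
  have g4 : u + -(a₄ : ℂ) ≠ 0 := by rw [← sub_eq_add_neg]; exact sub_ne_zero.2 n4
  have g5 : u + (2 - s) * (t + 1) ≠ 0 := fun h => n5 (eq_neg_of_add_eq_zero_left h)
  have g6 : u + t ≠ 0 := fun h => n6 (eq_neg_of_add_eq_zero_left h)
  have g7 : u + s * t ≠ 0 := fun h => n7 (eq_neg_of_add_eq_zero_left h)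
  have A := partA u s t g7 g6 g3 f1 hE
  have B := partB u s t _ hs c4 hw0 g5 g6 g3 g4 hE
  rw [← sub_eq_add_neg u (a₄ : ℂ)] at B
  rw [hD]
  simp only [c2, c3, c5, c6, c7, ck, sub_neg_eq_add]
  linear_combination A + ((m₁ : ℂ) - m₂) / 2 * B
end

section
/- Let m₁, m₂ ∈ ℝ with m₂ < m₁ and m₂ < 1. Define a₂ = −1, a₃ = −√2, a₄ = −(1+√2)(2−m₁−m₂)/(2(1−m₂)), a₅ = −(4−2√2)(1−m₂)/(m₁−m₂), a₆ = −(2−m₁−m₂)/(m₁−m₂), a₇ = −√2(2−m₁−m₂)/(m₁−m₂). Then the ordering a₇ ≤ a₆ ≤ a₅ ≤ a₄ ≤ a₃ ≤ a₂ holds if and only if m₂ ≥ (3+2√2)m₁ − 2(1+√2). -/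
/-- Feasibility of the symmetric octagon: the tangency parameters are
correctly ordered, `a₇ ≤ a₆ ≤ a₅ ≤ a₄ ≤ a₃ ≤ a₂`, iff
`m₂ ≥ (3+2√2)m₁ − 2(1+√2)`. -/
theorem octagon_feasibility (m₁ m₂ : ℝ) (h1 : m₂ < m₁) (h2 : m₂ < 1)
    (a₂ a₃ a₄ a₅ a₆ a₇ : ℝ)
    (ha2 : a₂ = -1) (ha3 : a₃ = -Real.sqrt 2)
    (ha4 : a₄ = -((1 + Real.sqrt 2) * (2 - m₁ - m₂)) / (2 * (1 - m₂)))
    (ha5 : a₅ = -((4 - 2 * Real.sqrt 2) * (1 - m₂)) / (m₁ - m₂))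
    (ha6 : a₆ = -(2 - m₁ - m₂) / (m₁ - m₂))
    (ha7 : a₇ = -(Real.sqrt 2 * (2 - m₁ - m₂)) / (m₁ - m₂)) :
    (a₇ ≤ a₆ ∧ a₆ ≤ a₅ ∧ a₅ ≤ a₄ ∧ a₄ ≤ a₃ ∧ a₃ ≤ a₂) ↔
      m₂ ≥ (3 + 2 * Real.sqrt 2) * m₁ - 2 * (1 + Real.sqrt 2) := by
  have hs2 : Real.sqrt 2 * Real.sqrt 2 = 2 := Real.mul_self_sqrt (by norm_num)
  have hs0 : 0 ≤ Real.sqrt 2 := Real.sqrt_nonneg 2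
  subst ha2 ha3 ha4 ha5 ha6 ha7
  generalize Real.sqrt 2 = s at *
  have hsl : 1.4 < s := by nlinarith
  have hsu : s < 1.5 := by nlinarith
  obtain ⟨u, rfl⟩ : ∃ u, m₂ = 1 - u := ⟨1 - m₂, by ring⟩
  obtain ⟨d, rfl⟩ : ∃ d, m₁ = 1 - u + d := ⟨m₁ - (1 - u), by ring⟩
  have hu : 0 < u := by linarith
  have hd : 0 < d := by linarith
  have e1 : 2 - (1 - u + d) - (1 - u) = 2 * u - d := by ring
  have e2 : 1 - u + d - (1 - u) = d := by ring
  have e3 : 1 - (1 - u) = u := by ring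
  rw [e1, e2, e3]
  have key : (1 - u ≥ (3 + 2 * s) * (1 - u + d) - 2 * (1 + s)) ↔ d ≤ (2 * s - 2) * u := by
    have e : 1 - u - ((3 + 2 * s) * (1 - u + d) - 2 * (1 + s))
        = (3 + 2 * s) * ((2 * s - 2) * u - d) := by
      linear_combination (-4 * u) * hs2
    have hp : 0 < 3 + 2 * s := by linarith
    constructor
    · intro h
      have h' : 0 ≤ (3 + 2 * s) * ((2 * s - 2) * u - d) := by rw [← e]; linarith
      have := nonneg_of_mul_nonneg_right h' hp
      linarith
    · intro h
      have := mul_nonneg hp.le (sub_nonneg.mpr h)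
      linarith
  rw [key]
  constructor
  · rintro ⟨-, h, -⟩
    rw [div_le_div_iff_of_pos_right hd] at h
    linarith
  · intro h
    have h2u : d ≤ 2 * u := by nlinarith
    refine ⟨?_, ?_, ?_, ?_, by linarith⟩
    · rw [div_le_div_iff_of_pos_right hd]
      nlinarith
    · rw [div_le_div_iff_of_pos_right hd]
      linarith
    · rw [div_le_div_iff₀ hd (by linarith)]
      have hA : 0 ≤ (2 * s - 2) * u - d := by linarith
      have hB : 0 ≤ (4 - 2 * s) * u - d := by nlinarith
      have hC := mul_nonneg (by linarith : 0 ≤ 1 + s) (mul_nonneg hA hB)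
      have e : -((1 + s) * (2 * u - d)) * d - -((4 - 2 * s) * u) * (2 * u)
        = (1 + s) * (((2 * s - 2) * u - d) * ((4 - 2 * s) * u - d)) := by
        linear_combination (4 * s * u ^ 2 - 8 * u ^ 2) * hs2
      linarith
    · rw [div_le_iff₀ (by linarith)]
      have := mul_nonneg (by linarith : 0 ≤ 1 + s) (sub_nonneg.mpr h)
      have e : -s * (2 * u) - -((1 + s) * (2 * u - d)) = (1 + s) * ((2 * s - 2) * u - d) := by
        linear_combination (-2 * u) * hs2
      linarith
end

section
/- Let r > 1 and let z ∈ ℂ with Im z < 0 and z ≠ 0, and set w = (1−z)/(1−(1−r²)z) and θ = 2π + Arg(z/(1−z)), where Arg is the principal argument. Define t = (π + Arg z)/θ and s = (π − Arg w)/θ. Then π < θ < 2π, s > 0, t > 0, and s + t < 1; that is, (s,t) lies in the interior of the triangle N = conv{(0,0),(1,0),(0,1)}, the Newton polygon of the five-vertex model. -/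
open Complex

theorem arg_bounds (a : ℂ) (h : 0 < a.im) : 0 < a.arg ∧ a.arg < Real.pi := by
  constructor
  · apply lt_of_le_of_ne (Complex.arg_nonneg_iff.2 h.le)
    intro h'
    have := (Complex.arg_eq_zero_iff.1 h'.symm).2
    linarith
  · apply lt_of_le_of_ne (Complex.arg_le_pi a)
    intro h'
    have := (Complex.arg_eq_pi_iff.1 h').2
    linarith

/-- For the five-vertex model with `r > 1` and `z` in the open lower
half-plane, `z ≠ 0`, with `w = (1−z)/(1−(1−r²)z)`, `θ = 2π + Arg(z/(1−z))`,
`t = (π + Arg z)/θ` and `s = (π − Arg w)/θ`, one has `π < θ < 2π`, `s > 0`,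
`t > 0` and `s + t < 1`: the slope `(s,t)` lies in the interior of the
Newton polygon `N = conv{(0,0),(1,0),(0,1)}`. -/
theorem five_vertex_slope_in_newton_polygon (r : ℝ) (hr : 1 < r)
    (z : ℂ) (hz : z.im < 0) (h0 : z ≠ 0)
    (w : ℂ) (hw : w = (1 - z) / (1 - (1 - (r : ℂ) ^ 2) * z))
    (θ s t : ℝ)
    (hθ : θ = 2 * Real.pi + Complex.arg (z / (1 - z)))
    (ht : t = (Real.pi + Complex.arg z) / θ)
    (hs : s = (Real.pi - Complex.arg w) / θ) :
    Real.pi < θ ∧ θ < 2 * Real.pi ∧ 0 < s ∧ 0 < t ∧ s + t < 1 := by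
  have hz0 := Complex.arg_neg_iff.2 hz
  have hz1 := Complex.neg_pi_lt_arg z
  have imu : (1 - z).im = -z.im := by simp
  have hu0 : (1 - z) ≠ 0 := by
    intro h
    rw [h] at imu
    simp at imu
    linarith
  have hb : 0 < (1 - z).arg ∧ (1 - z).arg < Real.pi := arg_bounds _ (by rw [imu]; linarith)
  set u := z / (1 - z) with hu
  have hune : u ≠ 0 := div_ne_zero h0 hu0
  have huim : u.im < 0 := by
    have h1 : u.im = z.im / Complex.normSq (1 - z) := by
      rw [hu, Complex.div_im, imu]
      simp only [Complex.sub_re, Complex.one_re]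
      ring
    rw [h1]
    exact div_neg_of_neg_of_pos hz (Complex.normSq_pos.2 hu0)
  have hua := Complex.arg_neg_iff.2 huim
  have hub := Complex.neg_pi_lt_arg u
  have e1 : z.arg = u.arg + (1 - z).arg := by
    rw [← Complex.arg_mul hune hu0 ⟨by linarith, by linarith⟩, hu, div_mul_cancel₀ _ hu0]
  have hc : 0 < r ^ 2 - 1 := by nlinarith
  set v : ℂ := 1 - (1 - (r : ℂ) ^ 2) * z with hv
  have hv' : v = 1 + ((r ^ 2 - 1 : ℝ) : ℂ) * z := by rw [hv]; push_cast; ring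
  have hvim : v.im < 0 := by
    have : v.im = (r ^ 2 - 1) * z.im := by
      rw [hv', Complex.add_im, Complex.im_ofReal_mul]; simp
    rw [this]
    exact mul_neg_of_pos_of_neg hc hz
  have hv0 : v ≠ 0 := by intro h; rw [h] at hvim; simp at hvim
  have hva := Complex.arg_neg_iff.2 hvim
  have hvb := Complex.neg_pi_lt_arg v
  have hqim : 0 < (((r ^ 2 - 1 : ℝ) : ℂ) + z⁻¹).im := by
    rw [Complex.add_im, Complex.ofReal_im, Complex.inv_im, zero_add]
    exact div_pos (by linarith) (Complex.normSq_pos.2 h0)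
  have hq0 : ((r ^ 2 - 1 : ℝ) : ℂ) + z⁻¹ ≠ 0 := by intro h; rw [h] at hqim; simp at hqim
  obtain ⟨hq1, hq2⟩ := arg_bounds _ hqim
  have e2 : v.arg = z.arg + (((r ^ 2 - 1 : ℝ) : ℂ) + z⁻¹).arg := by
    rw [← Complex.arg_mul h0 hq0 ⟨by linarith, by linarith⟩, hv']
    congr 1
    rw [mul_add, mul_inv_cancel₀ h0]
    ring
  have e3 : v⁻¹.arg = - v.arg := by
    rw [Complex.arg_inv, if_neg (by linarith)]
  have e4 : w.arg = (1 - z).arg - v.arg := by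
    rw [hw, div_eq_mul_inv, Complex.arg_mul hu0 (inv_ne_zero hv0) ⟨by linarith, by linarith⟩, e3]
    ring
  have hθ1 : Real.pi < θ := by linarith
  have hp := Real.pi_pos
  have hθ0 : 0 < θ := by linarith
  refine ⟨hθ1, by linarith, ?_, ?_, ?_⟩
  · rw [hs]; exact div_pos (by linarith) hθ0
  · rw [ht]; exact div_pos (by linarith) hθ0
  · rw [hs, ht, ← add_div, div_lt_one hθ0]
    linarith
end

section
/- Let m > 0 and define a₂ = −√m/(2^{1/4}√(m+2)), a₃ = −2^{1/4}√m/√(m+2), a₄ = −((2+√2)/2^{7/4})·√(m(m+2))/(m+1), and a₅ = 1/a₄, a₆ = 1/a₃, a₇ = 1/a₂. Let z(u) = −(u−a₃)(u−a₇)/(u(u−a₅)) and define the rational function D(u) = −1/(u−a₇) + (m+1)/(u−a₅) − (m+1)/(u−a₄) + 1/(u−a₂). Then for every u₀ ∈ ℂ that is not a pole of z or of D and satisfies z'(u₀) = 0, one has D(u₀) = 0. -/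
open Complex

/-- Five-vertex boxed plane partition: the rational function `D` (which is
`2i` times the Wirtinger derivative of the numerator `G` of the intercept)
vanishes at every critical point of the degree-2 map
`z(u) = −(u−a₃)(u−a₇)/(u(u−a₅))` which is not a pole of `z` or of `D`. -/
theorem five_vertex_bpp_critical_points (m : ℝ) (hm : 0 < m)
    (a₂ a₃ a₄ a₅ a₆ a₇ : ℝ)
    (h2 : a₂ = -Real.sqrt m / ((2 : ℝ) ^ ((1 : ℝ) / 4) * Real.sqrt (m + 2)))
    (h3 : a₃ = -((2 : ℝ) ^ ((1 : ℝ) / 4) * Real.sqrt m) / Real.sqrt (m + 2))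
    (h4 : a₄ = -((2 + Real.sqrt 2) / (2 : ℝ) ^ ((7 : ℝ) / 4)) *
      (Real.sqrt (m * (m + 2)) / (m + 1)))
    (h5 : a₅ = 1 / a₄) (h6 : a₆ = 1 / a₃) (h7 : a₇ = 1 / a₂)
    (z D : ℂ → ℂ)
    (hz : z = fun u => -((u - (a₃ : ℂ)) * (u - (a₇ : ℂ))) / (u * (u - (a₅ : ℂ))))
    (hD : D = fun u => -1 / (u - (a₇ : ℂ)) + ((m : ℂ) + 1) / (u - (a₅ : ℂ))
      - ((m : ℂ) + 1) / (u - (a₄ : ℂ)) + 1 / (u - (a₂ : ℂ))) :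
    ∀ u₀ : ℂ, u₀ ≠ 0 → u₀ ≠ (a₂ : ℂ) → u₀ ≠ (a₄ : ℂ) → u₀ ≠ (a₅ : ℂ) →
      u₀ ≠ (a₇ : ℂ) → deriv z u₀ = 0 → D u₀ = 0 := by
  obtain ⟨c, hc⟩ : ∃ c : ℝ, c = (2 : ℝ) ^ ((1 : ℝ) / 4) := ⟨_, rfl⟩
  have hc0 : 0 < c := by rw [hc]; positivity
  have hc4 : c ^ 4 = 2 := by
    rw [hc, ← Real.rpow_natCast, ← Real.rpow_mul (by norm_num)]; norm_num
  have hc7 : (2 : ℝ) ^ ((7 : ℝ) / 4) = c ^ 7 := by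
    rw [hc, ← Real.rpow_natCast, ← Real.rpow_mul (by norm_num)]; norm_num
  have hc2 : Real.sqrt 2 = c ^ 2 := by
    rw [Real.sqrt_eq_iff_mul_self_eq (by norm_num) (by positivity)]; nlinarith
  rw [hc7, hc2, Real.sqrt_mul hm.le] at h4
  rw [← hc] at h2 h3
  have hs0 : 0 < Real.sqrt m := Real.sqrt_pos.2 hm
  have ht0 : 0 < Real.sqrt (m + 2) := Real.sqrt_pos.2 (by linarith)
  have hs2 : Real.sqrt m ^ 2 = m := Real.sq_sqrt hm.le
  have ht2 : Real.sqrt (m + 2) ^ 2 = m + 2 := Real.sq_sqrt (by linarith)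
  generalize Real.sqrt m = s at *
  generalize Real.sqrt (m + 2) = t at *
  have hm1 : 0 < m + 1 := by linarith
  have e2 : a₂ = -(s / (c * t)) := by rw [h2]; ring
  have e3 : a₃ = -(c * s / t) := by rw [h3]; ring
  have e4 : a₄ = -((c ^ 2 + 1) * (s * t) / (c ^ 5 * (m + 1))) := by
    have h' : (2 + c ^ 2) / c ^ 7 = (c ^ 2 + 1) / c ^ 5 := by
      rw [← hc4]; field_simp
    rw [h4, h']
    field_simp
  have e5 : a₅ = -(c ^ 5 * (m + 1) / ((c ^ 2 + 1) * (s * t))) := by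
    rw [h5, e4]; field_simp
  have e7 : a₇ = -(c * t / s) := by
    rw [h7, e2]; field_simp
  have F27 : a₂ * a₇ = 1 := by rw [e2, e7]; field_simp
  have F45 : a₄ * a₅ = 1 := by rw [e4, e5]; field_simp
  have F37 : a₃ * a₇ = c ^ 2 := by rw [e3, e7]; field_simp
  have F1 : a₃ + a₇ = (1 + c ^ 2) * a₅ := by
    rw [e3, e7, e5]
    have : c ^ 5 = 2 * c := by linear_combination c * hc4
    rw [this]
    field_simp
    linear_combination (-(1 + c ^ 2)) * hs2 - (1 + c ^ 2) * ht2
  have F2 : (m + 2) * a₂ + m * a₇ = 2 * (m + 1) * a₄ := by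
    rw [e2, e7, e4]
    have : c ^ 5 = 2 * c := by linear_combination c * hc4
    rw [this, ← ht2]
    field_simp
    rw [← hs2]
    ring
  have ha5 : a₅ ≠ 0 := right_ne_zero_of_mul_eq_one F45
  intro u hu0 hu2 hu4 hu5 hu7 hdz
  have G27 : (a₂ : ℂ) * a₇ = 1 := by exact_mod_cast F27
  have G45 : (a₄ : ℂ) * a₅ = 1 := by exact_mod_cast F45
  have G37 : (a₃ : ℂ) * a₇ = (c : ℂ) ^ 2 := by exact_mod_cast F37
  have G1 : (a₃ : ℂ) + a₇ = (1 + (c : ℂ) ^ 2) * a₅ := by exact_mod_cast F1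
  have G2 : ((m : ℂ) + 2) * a₂ + m * a₇ = 2 * (m + 1) * a₄ := by exact_mod_cast F2
  have hC : (c : ℂ) ^ 2 ≠ 0 := by exact_mod_cast (pow_pos hc0 2).ne'
  have hA5 : (a₅ : ℂ) ≠ 0 := by exact_mod_cast ha5
  have s2 := sub_ne_zero.2 hu2
  have s4 := sub_ne_zero.2 hu4
  have s5 := sub_ne_zero.2 hu5
  have s7 := sub_ne_zero.2 hu7
  have hden : u * (u - (a₅ : ℂ)) ≠ 0 := mul_ne_zero hu0 s5
  have hder : HasDerivAt z
      ((-(1 * (u - (a₇ : ℂ)) + (u - (a₃ : ℂ)) * 1) * (u * (u - (a₅ : ℂ)))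
        - -((u - (a₃ : ℂ)) * (u - (a₇ : ℂ))) * (1 * (u - (a₅ : ℂ)) + u * 1))
        / (u * (u - (a₅ : ℂ))) ^ 2) u := by
    rw [hz]
    exact ((((hasDerivAt_id u).sub_const _).mul ((hasDerivAt_id u).sub_const _)).neg).div
      ((hasDerivAt_id u).mul ((hasDerivAt_id u).sub_const _)) hden
  rw [hder.deriv, div_eq_zero_iff] at hdz
  have hn := hdz.resolve_right (pow_ne_zero 2 hden)
  have hq : (c : ℂ) ^ 2 * a₅ * (u ^ 2 - 2 * a₄ * u + 1) = 0 := by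
    linear_combination -hn - u ^ 2 * G1 + (2 * u - a₅) * G37 - 2 * u * (c : ℂ) ^ 2 * G45
  have hq2 : u ^ 2 - 2 * a₄ * u + 1 = 0 :=
    (mul_eq_zero.1 hq).resolve_left (mul_ne_zero hC hA5)
  have key : ((a₂ : ℂ) - a₇) * ((u - a₄) * (u - a₅))
      + (m + 1) * (a₅ - a₄) * ((u - a₂) * (u - a₇)) = 0 := by
    linear_combination ((a₂ : ℂ) - a₇ + (m + 1) * (a₅ - a₄)) * hq2
      - u * (a₅ - a₄) * G2 + ((a₂ : ℂ) - a₇) * G45 + (m + 1) * (a₅ - a₄) * G27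
  have hDu : D u = (((a₂ : ℂ) - a₇) * ((u - a₄) * (u - a₅))
      + (m + 1) * (a₅ - a₄) * ((u - a₂) * (u - a₇)))
      / ((u - a₂) * (u - a₇) * ((u - a₄) * (u - a₅))) := by
    rw [hD]
    field_simp
    ring
  rw [hDu, key, zero_div]
end

section
/- Let Ω ⊆ ℂ be open and let s, t, X, Y, F : Ω → ℝ be real-differentiable functions, with Wirtinger derivative f_z = (∂f/∂x − i ∂f/∂y)/2. Assume that at every point of Ω: X_z + iπ·t_z = 0, Y_z − iπ·s_z = 0, F_z = s·X_z + t·Y_z, and 1 + t ≠ 0. Define s̃ = (s−t)/(1+t), t̃ = t/(1+t), X̃ = X, and Ỹ = Y + X + F. Then at every point of Ω: X̃_z + iπ(1+t)²·t̃_z = 0 and Ỹ_z − iπ(1+t)²·s̃_z = 0. -/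
open Complex

/-- The Wirtinger derivative `f_z = (∂f/∂x − i ∂f/∂y)/2` of a real-valued
function of a complex variable. -/
noncomputable def wirtingerD (f : ℂ → ℝ) (u : ℂ) : ℂ :=
  (((fderiv ℝ f u 1 : ℝ) : ℂ) - ((fderiv ℝ f u Complex.I : ℝ) : ℂ) * Complex.I) / 2

theorem wirtingerD_add_aux (f g : ℂ → ℝ) (u : ℂ) (hf : DifferentiableAt ℝ f u)
    (hg : DifferentiableAt ℝ g u) :
    wirtingerD (fun v => f v + g v) u = wirtingerD f u + wirtingerD g u := by
  have h := (hf.hasFDerivAt.fun_add hg.hasFDerivAt).fderiv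
  unfold wirtingerD
  rw [h]
  simp only [ContinuousLinearMap.add_apply]
  push_cast
  ring

theorem wirtingerD_sub_aux (f g : ℂ → ℝ) (u : ℂ) (hf : DifferentiableAt ℝ f u)
    (hg : DifferentiableAt ℝ g u) :
    wirtingerD (fun v => f v - g v) u = wirtingerD f u - wirtingerD g u := by
  have h := (hf.hasFDerivAt.fun_sub hg.hasFDerivAt).fderiv
  unfold wirtingerD
  rw [h]
  simp only [ContinuousLinearMap.sub_apply]
  push_cast
  ring

theorem wirtingerD_mul_aux (f g : ℂ → ℝ) (u : ℂ) (hf : DifferentiableAt ℝ f u)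
    (hg : DifferentiableAt ℝ g u) :
    wirtingerD (fun v => f v * g v) u =
      (f u : ℂ) * wirtingerD g u + (g u : ℂ) * wirtingerD f u := by
  have h := (hf.hasFDerivAt.fun_mul hg.hasFDerivAt).fderiv
  unfold wirtingerD
  rw [h]
  simp only [ContinuousLinearMap.add_apply, ContinuousLinearMap.smul_apply, smul_eq_mul]
  push_cast
  ring

theorem wirtingerD_div_aux (f t : ℂ → ℝ) (u : ℂ) (hf : DifferentiableAt ℝ f u)
    (ht : DifferentiableAt ℝ t u) (h0 : 1 + t u ≠ 0) :
    (((1 + t u) ^ 2 : ℝ) : ℂ) * wirtingerD (fun v => f v / (1 + t v)) u =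
      (1 + (t u : ℂ)) * wirtingerD f u - (f u : ℂ) * wirtingerD t u := by
  have hg : DifferentiableAt ℝ (fun v => 1 + t v) u := ht.const_add 1
  have hq : DifferentiableAt ℝ (fun v => f v / (1 + t v)) u := by
    simp only [div_eq_mul_inv]
    exact hf.fun_mul (hg.fun_inv h0)
  have hm := wirtingerD_mul_aux _ _ u hq hg
  have e : (fun v => f v / (1 + t v) * (1 + t v)) =ᶠ[nhds u] f := by
    filter_upwards [hg.continuousAt.eventually_ne h0] with v hv
    exact div_mul_cancel₀ _ hv
  have e1 : wirtingerD (fun v => f v / (1 + t v) * (1 + t v)) u = wirtingerD f u := by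
    unfold wirtingerD
    rw [e.fderiv_eq]
  have e2 : wirtingerD (fun v => 1 + t v) u = wirtingerD t u := by
    unfold wirtingerD
    rw [fderiv_const_add]
  rw [e1, e2] at hm
  have h0' : (1 + (t u : ℂ)) ≠ 0 := by exact_mod_cast h0
  rw [hm]
  push_cast
  field_simp
  ring

/-- Trivial potential for the four-vertex model: if on an open set `Ω` the
lozenge quantities satisfy `X_z + iπ t_z = 0`, `Y_z − iπ s_z = 0`,
`F_z = s·X_z + t·Y_z` and `1 + t ≠ 0`, then the four-vertex quantities
`s̃ = (s−t)/(1+t)`, `t̃ = t/(1+t)`, `X̃ = X`, `Ỹ = Y + X + F` satisfy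
`X̃_z + iπ(1+t)²·t̃_z = 0` and `Ỹ_z − iπ(1+t)²·s̃_z = 0` on `Ω`. -/
theorem four_vertex_trivial_potential (Ω : Set ℂ) (hΩ : IsOpen Ω)
    (s t X Y F : ℂ → ℝ)
    (hs : DifferentiableOn ℝ s Ω) (ht : DifferentiableOn ℝ t Ω)
    (hX : DifferentiableOn ℝ X Ω) (hY : DifferentiableOn ℝ Y Ω)
    (hF : DifferentiableOn ℝ F Ω)
    (hXt : ∀ u ∈ Ω, wirtingerD X u + Complex.I * (Real.pi : ℂ) * wirtingerD t u = 0)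
    (hYs : ∀ u ∈ Ω, wirtingerD Y u - Complex.I * (Real.pi : ℂ) * wirtingerD s u = 0)
    (hFz : ∀ u ∈ Ω, wirtingerD F u =
      (s u : ℂ) * wirtingerD X u + (t u : ℂ) * wirtingerD Y u)
    (hne : ∀ u ∈ Ω, 1 + t u ≠ 0) :
    ∀ u ∈ Ω,
      wirtingerD X u + Complex.I * (Real.pi : ℂ) * (((1 + t u) ^ 2 : ℝ) : ℂ) *
        wirtingerD (fun v => t v / (1 + t v)) u = 0 ∧
      wirtingerD (fun v => Y v + X v + F v) u
        - Complex.I * (Real.pi : ℂ) * (((1 + t u) ^ 2 : ℝ) : ℂ) *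
          wirtingerD (fun v => (s v - t v) / (1 + t v)) u = 0 := by
  intro u hu
  have hn := hΩ.mem_nhds hu
  have ds := hs.differentiableAt hn
  have dt := ht.differentiableAt hn
  have dX := hX.differentiableAt hn
  have dY := hY.differentiableAt hn
  have dF := hF.differentiableAt hn
  have h1 := wirtingerD_div_aux t t u dt dt (hne u hu)
  have h2 := wirtingerD_div_aux (fun v => s v - t v) t u (ds.fun_sub dt) dt (hne u hu)
  rw [wirtingerD_sub_aux s t u ds dt] at h2
  have h3 := wirtingerD_add_aux (fun v => Y v + X v) F u (dY.fun_add dX) dF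
  rw [wirtingerD_add_aux Y X u dY dX] at h3
  have a := hXt u hu
  have b := hYs u hu
  have c := hFz u hu
  constructor
  · rw [mul_assoc, h1]
    linear_combination a
  · rw [h3, mul_assoc, h2, c]
    push_cast
    linear_combination (1 + (t u : ℂ)) * b + (1 + (s u : ℂ)) * a
end
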